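/- In every dimension N ≥ 1, the pull-in voltage of (P)_λ on the unit ball satisfies the strict lower bound λ* > λ̄_N = (8/9)(N−2/3)(N−8/3). -/

import Mathlib

open MeasureTheory Metric Set Filter

/-- The Laplacian of `u : ℝ^N → ℝ`, as the sum of pure second partial derivatives. -/
noncomputable def lap {N : ℕ} (u : EuclideanSpace ℝ (Fin N) → ℝ) (x : EuclideanSpace ℝ (Fin N)) : ℝ :=
  ∑ i : Fin N, fderiv ℝ (fun y => fderiv ℝ u y (EuclideanSpace.single i 1)) x
    (EuclideanSpace.single i 1)

/-- The biharmonic operator `Δ²`. -/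
noncomputable def biharm {N : ℕ} (u : EuclideanSpace ℝ (Fin N) → ℝ)
    (x : EuclideanSpace ℝ (Fin N)) : ℝ :=
  lap (lap u) x

/-- A classical solution of `(P)_λ` on the unit ball `B ⊆ ℝ^N`:
`u ∈ C⁴(B̄)`, `0 < u < 1` in `B`, `Δ²u = λ (1-u)⁻²` in `B`, and `u = 0`, `∂_ν u = 0` on `∂B`. -/
structure IsClassicalSolution (N : ℕ) (lam : ℝ) (u : EuclideanSpace ℝ (Fin N) → ℝ) : Prop where
  contDiffOn : ContDiffOn ℝ 4 u (closedBall (0 : EuclideanSpace ℝ (Fin N)) 1)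
  pos : ∀ x ∈ ball (0 : EuclideanSpace ℝ (Fin N)) 1, 0 < u x
  lt_one : ∀ x ∈ ball (0 : EuclideanSpace ℝ (Fin N)) 1, u x < 1
  eqn : ∀ x ∈ ball (0 : EuclideanSpace ℝ (Fin N)) 1, biharm u x = lam / (1 - u x) ^ 2
  bdry : ∀ x : EuclideanSpace ℝ (Fin N), ‖x‖ = 1 → u x = 0
  bdry_deriv : ∀ x : EuclideanSpace ℝ (Fin N), ‖x‖ = 1 →
    fderivWithin ℝ u (closedBall (0 : EuclideanSpace ℝ (Fin N)) 1) x x = 0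

/-- The set of voltages `λ > 0` for which `(P)_λ` admits a classical solution;
the pull-in voltage `λ*` is its supremum. -/
def solSet (N : ℕ) : Set ℝ := {lam | 0 < lam ∧ ∃ u, IsClassicalSolution N lam u}

/-- `λ̄_N = (8/9)(N - 2/3)(N - 8/3)`. -/
noncomputable def lamBar (N : ℕ) : ℝ := (8 / 9) * ((N : ℝ) - 2 / 3) * ((N : ℝ) - 8 / 3)

/-!
Since `λ̄_N < N (N + 2)`, it suffices to solve the problem for `λ = N (N + 2)` and to bound the set
of admissible `λ`.

In the variable `s = ‖x‖ ^ 2` the radial clamped plate problem `Δ²u = f` splits into two first order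
equations `4 s P' + 2 N P = g`, whose smooth solutions are weighted averages of `g`. The resulting
Green operator `G` preserves positivity and satisfies `G 1 = (1 - s) ^ 2 / (8 N (N + 2))`, so its
norm on `C([0, 1])` is at most `1 / (8 N (N + 2))`. For `λ ≤ N (N + 2)` the nonlinearity
`t ↦ λ / (1 - t) ^ 2` is truncated smoothly between `3 / 10` and `1 / 3`: it then has Lipschitz
constant `27 λ / 4 < 8 N (N + 2)`, so `f = λ / (1 - G f) ^ 2` is solved by contraction, and it is
bounded by `9 λ / 4`, so `G f ≤ 9 / 32` never meets the truncation.

For a bump function `φ` supported in the ball, integration by parts shows that every admissible `λ`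
satisfies `λ ∫ φ ≤ ∫ φ Δ²u = ∫ u Δ²φ ≤ ∫ |Δ²φ|`.
-/

open scoped NNReal ContDiff

section Integrals

variable {E : Type*} [NormedAddCommGroup E] [NormedSpace ℝ E]

lemma hasDerivAt_intervalIntegral_of_continuous {F F' : ℝ → ℝ → E} {a b x : ℝ}
    (hF : ∀ y, Continuous (F y)) (hF' : Continuous F'.uncurry)
    (h : ∀ y t, HasDerivAt (F · t) (F' y t) y) :
    HasDerivAt (fun y ↦ ∫ t in a..b, F y t) (∫ t in a..b, F' x t) x := by
  obtain ⟨C, hC⟩ := ((isCompact_Icc (a := x - 1) (b := x + 1)).prod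
    (isCompact_uIcc (a := a) (b := b))).exists_bound_of_continuousOn hF'.continuousOn
  refine (intervalIntegral.hasDerivAt_integral_of_dominated_loc_of_deriv_le
    (s := Icc (x - 1) (x + 1)) (bound := fun _ ↦ C) (Icc_mem_nhds (by linarith) (by linarith))
    (.of_forall fun y ↦ (hF y).aestronglyMeasurable) ((hF x).intervalIntegrable a b)
    (by fun_prop) (.of_forall fun t ht y hy ↦ hC (y, t) ⟨hy, uIoc_subset_uIcc ht⟩)
    intervalIntegrable_const (.of_forall fun t _ y _ ↦ h y t)).2

lemma contDiff_succ_of_hasDerivAt {m : ℕ} {f f' : ℝ → E} (h : ∀ x, HasDerivAt f (f' x) x)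
    (hf' : ContDiff ℝ m f') : ContDiff ℝ (m + 1) f := by
  rw [contDiff_succ_iff_deriv, funext fun x ↦ (h x).deriv]
  exact ⟨fun x ↦ (h x).differentiableAt, by simp, hf'⟩

end Integrals

/-! ### The radial clamped biharmonic problem -/

section RadialOperators

/-- The primitive of a continuous function vanishing at `a`. -/
noncomputable def primitive (a : ℝ) : C(ℝ, ℝ) →ₗ[ℝ] C(ℝ, ℝ) where
  toFun f := ⟨fun s ↦ ∫ t in a..s, f t,
    intervalIntegral.continuous_primitive (fun _ _ ↦ f.continuous.intervalIntegrable _ _) a⟩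
  map_add' f g := ContinuousMap.ext fun _ ↦ intervalIntegral.integral_add
    (f.continuous.intervalIntegrable _ _) (g.continuous.intervalIntegrable _ _)
  map_smul' c _ := ContinuousMap.ext fun _ ↦ intervalIntegral.integral_const_mul c _

/-- The derivative `U'` of the profile of the radial solution `x ↦ U (‖x‖ ^ 2)` of
`Δu = f (‖x‖ ^ 2)` in dimension `k + 1`: the solution, smooth at the origin, of
`4 s P' + 2 (k + 1) P = f`. -/
noncomputable def radialSlope (k : ℕ) : C(ℝ, ℝ) →ₗ[ℝ] C(ℝ, ℝ) where
  toFun f := ⟨fun s ↦ 1 / 2 * ∫ r in (0 : ℝ)..1, r ^ k * f (r ^ 2 * s), by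
    refine continuous_const.mul ?_
    apply intervalIntegral.continuous_parametric_intervalIntegral_of_continuous'
    fun_prop⟩
  map_add' f g := by
    ext s
    simp only [ContinuousMap.coe_mk, ContinuousMap.add_apply, mul_add]
    rw [intervalIntegral.integral_add (Continuous.intervalIntegrable (by fun_prop) _ _)
      (Continuous.intervalIntegrable (by fun_prop) _ _), mul_add]
  map_smul' c f := by
    ext s
    simp only [ContinuousMap.coe_mk, ContinuousMap.smul_apply, smul_eq_mul, RingHom.id_apply,
      mul_left_comm _ c, intervalIntegral.integral_const_mul]

/-- The profile `V` of the Laplacian `Δu = V (‖x‖ ^ 2)` of the radial solution of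
`Δ²u = f (‖x‖ ^ 2)`, `u = ∂_ν u = 0` on the unit sphere of `ℝ^(n + 1)`. The additive constant is
the one for which `U' = radialSlope n V` vanishes at `1`. -/
noncomputable def lapProfile (n : ℕ) : C(ℝ, ℝ) →ₗ[ℝ] C(ℝ, ℝ) where
  toFun f := primitive 0 (radialSlope n f) -
    (2 * (n + 1) * radialSlope n (primitive 0 (radialSlope n f)) 1) • 1
  map_add' f g := by
    simp only [map_add, ContinuousMap.add_apply, mul_add, add_smul]
    abel
  map_smul' c f := by
    simp only [map_smul, ContinuousMap.smul_apply, smul_eq_mul, mul_left_comm _ c, mul_smul,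
      smul_sub, RingHom.id_apply]

/-- The Green operator of the radial clamped plate problem on the unit ball of `ℝ^(n + 1)`: the
solution of `Δ²u = f (‖x‖ ^ 2)`, `u = ∂_ν u = 0` on the sphere is `clampedGreen n f (‖x‖ ^ 2)`. -/
noncomputable def clampedGreen (n : ℕ) : C(ℝ, ℝ) →ₗ[ℝ] C(ℝ, ℝ) :=
  primitive 1 ∘ₗ radialSlope n ∘ₗ lapProfile n

lemma primitive_apply (a : ℝ) (f : C(ℝ, ℝ)) (s : ℝ) : primitive a f s = ∫ t in a..s, f t := rfl

lemma radialSlope_apply (k : ℕ) (f : C(ℝ, ℝ)) (s : ℝ) :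
    radialSlope k f s = 1 / 2 * ∫ r in (0 : ℝ)..1, r ^ k * f (r ^ 2 * s) := rfl

lemma lapProfile_apply (n : ℕ) (f : C(ℝ, ℝ)) :
    lapProfile n f = primitive 0 (radialSlope n f) -
      (2 * (n + 1) * radialSlope n (primitive 0 (radialSlope n f)) 1) • 1 := rfl

lemma clampedGreen_apply (n : ℕ) (f : C(ℝ, ℝ)) :
    clampedGreen n f = primitive 1 (radialSlope n (lapProfile n f)) := rfl

lemma clampedGreen_apply_one (n : ℕ) (f : C(ℝ, ℝ)) : clampedGreen n f 1 = 0 :=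
  intervalIntegral.integral_same

lemma primitive_one (a : ℝ) : primitive a 1 = .id ℝ - a • 1 := by
  ext s
  simp [primitive_apply]

lemma primitive_eq_primitive_of_eq_zero {a s t : ℝ} {f : C(ℝ, ℝ)} (hf : ∀ τ ∈ uIcc s t, f τ = 0) :
    primitive a f t = primitive a f s := by
  rw [← sub_eq_zero, primitive_apply, primitive_apply,
    intervalIntegral.integral_interval_sub_left (f.continuous.intervalIntegrable _ _)
      (f.continuous.intervalIntegrable _ _), intervalIntegral.integral_congr hf,
    intervalIntegral.integral_zero]

lemma radialSlope_one (k : ℕ) : radialSlope k 1 = (1 / (2 * (k + 1 : ℝ))) • 1 := by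
  ext s
  simp [radialSlope_apply, integral_pow, mul_comm]

lemma radialSlope_id (k : ℕ) : radialSlope k (.id ℝ) = (1 / (2 * (k + 3 : ℝ))) • .id ℝ := by
  ext s
  simp only [radialSlope_apply, ContinuousMap.id_apply, ← mul_assoc, ← pow_add,
    intervalIntegral.integral_mul_const, integral_pow, one_pow, ContinuousMap.smul_apply,
    smul_eq_mul]
  push_cast
  field_simp
  ring

lemma radialSlope_lapProfile_apply_one (n : ℕ) (f : C(ℝ, ℝ)) :
    radialSlope n (lapProfile n f) 1 = 0 := by
  simp only [lapProfile_apply, map_sub, map_smul, radialSlope_one, ContinuousMap.sub_apply,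
    ContinuousMap.smul_apply, ContinuousMap.one_apply, smul_eq_mul]
  field_simp
  ring

lemma lapProfile_one (n : ℕ) :
    lapProfile n 1 = (1 / (2 * (n + 1 : ℝ))) • .id ℝ - (1 / (2 * (n + 3 : ℝ))) • 1 := by
  ext s
  simp only [lapProfile_apply, radialSlope_one, map_smul, primitive_one, zero_smul, sub_zero,
    radialSlope_id, ContinuousMap.sub_apply, ContinuousMap.smul_apply, ContinuousMap.id_apply,
    ContinuousMap.one_apply, smul_eq_mul]
  field_simp

lemma radialSlope_lapProfile_one (n : ℕ) :
    radialSlope n (lapProfile n 1) = (1 / (4 * (n + 1 : ℝ) * (n + 3))) • (.id ℝ - 1) := by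
  ext s
  simp only [lapProfile_one, map_sub, map_smul, radialSlope_id, radialSlope_one,
    ContinuousMap.sub_apply, ContinuousMap.smul_apply, ContinuousMap.id_apply,
    ContinuousMap.one_apply, smul_eq_mul]
  field_simp
  ring

lemma clampedGreen_one (n : ℕ) (s : ℝ) :
    clampedGreen n 1 s = (1 - s) ^ 2 / (8 * (n + 1) * (n + 3)) := by
  have integral_sub_one : ∫ t in (1 : ℝ)..s, (t - 1) = (1 - s) ^ 2 / 2 := by
    rw [intervalIntegral.integral_comp_sub_right (fun t ↦ t) 1, integral_id]
    ring
  simp only [clampedGreen_apply, radialSlope_lapProfile_one, map_smul, ContinuousMap.smul_apply,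
    primitive_apply, ContinuousMap.sub_apply, ContinuousMap.id_apply, ContinuousMap.one_apply,
    integral_sub_one, smul_eq_mul]
  field_simp
  ring

lemma hasDerivAt_primitive (a : ℝ) (f : C(ℝ, ℝ)) (s : ℝ) : HasDerivAt (primitive a f) (f s) s :=
  (f.continuous.integral_hasStrictDerivAt a s).hasDerivAt

lemma hasDerivAt_lapProfile (n : ℕ) (f : C(ℝ, ℝ)) (s : ℝ) :
    HasDerivAt (lapProfile n f) (radialSlope n f s) s :=
  (hasDerivAt_primitive 0 (radialSlope n f) s).sub_const
    (2 * (n + 1) * radialSlope n (primitive 0 (radialSlope n f)) 1 * 1)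

lemma hasDerivAt_clampedGreen (n : ℕ) (f : C(ℝ, ℝ)) (s : ℝ) :
    HasDerivAt (clampedGreen n f) (radialSlope n (lapProfile n f) s) s :=
  hasDerivAt_primitive 1 _ s

lemma hasDerivAt_radialSlope (k : ℕ) {f f' : C(ℝ, ℝ)} (hf : ∀ s, HasDerivAt f (f' s) s) (s : ℝ) :
    HasDerivAt (radialSlope k f) (radialSlope (k + 2) f' s) s := by
  refine (hasDerivAt_intervalIntegral_of_continuous
    (F' := fun s r ↦ r ^ (k + 2) * f' (r ^ 2 * s)) (by fun_prop) (by fun_prop)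
    fun y r ↦ ?_).const_mul (1 / 2)
  have := ((hf (r ^ 2 * y)).comp y ((hasDerivAt_id y).const_mul (r ^ 2))).const_mul (r ^ k)
  exact this.congr_deriv (by ring)

lemma radialSlope_ode (k : ℕ) {f f' : C(ℝ, ℝ)} (hf : ∀ s, HasDerivAt f (f' s) s) (s : ℝ) :
    4 * s * radialSlope (k + 2) f' s + 2 * (k + 1) * radialSlope k f s = f s := by
  have hderiv (r : ℝ) : HasDerivAt (fun r ↦ r ^ (k + 1) * f (r ^ 2 * s))
      (2 * s * (r ^ (k + 2) * f' (r ^ 2 * s)) + (k + 1) * (r ^ k * f (r ^ 2 * s))) r := by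
    have := (hasDerivAt_pow (k + 1) r).mul
      ((hf (r ^ 2 * s)).comp r ((hasDerivAt_pow 2 r).mul_const s))
    refine this.congr_deriv ?_
    simp only [Function.comp_apply, add_tsub_cancel_right]
    push_cast
    ring
  have hFTC := intervalIntegral.integral_eq_sub_of_hasDerivAt (a := 0) (b := 1)
    (fun r _ ↦ hderiv r) (Continuous.intervalIntegrable (by fun_prop) _ _)
  rw [intervalIntegral.integral_add (Continuous.intervalIntegrable (by fun_prop) _ _)
    (Continuous.intervalIntegrable (by fun_prop) _ _), intervalIntegral.integral_const_mul,
    intervalIntegral.integral_const_mul, one_pow, one_pow, one_mul, one_mul,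
    zero_pow k.succ_ne_zero, zero_mul, sub_zero] at hFTC
  rw [radialSlope_apply, radialSlope_apply, ← hFTC]
  ring

lemma exists_hasDerivAt_of_contDiff {f : ℝ → ℝ} (hf : ContDiff ℝ 1 f) :
    ∃ f' : C(ℝ, ℝ), ∀ s, HasDerivAt f (f' s) s :=
  ⟨⟨deriv f, hf.continuous_deriv le_rfl⟩, fun s ↦ (hf.differentiable one_ne_zero s).hasDerivAt⟩

lemma contDiff_radialSlope {m : ℕ} (k : ℕ) {f : C(ℝ, ℝ)} (hf : ContDiff ℝ m f) :
    ContDiff ℝ m (radialSlope k f) := by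
  induction m generalizing k f with
  | zero => exact contDiff_zero.2 (radialSlope k f).continuous
  | succ m ih =>
    obtain ⟨f', hf'⟩ := exists_hasDerivAt_of_contDiff (hf.of_le (by norm_cast; omega))
    rw [Nat.cast_succ, contDiff_succ_iff_deriv, funext fun s ↦ (hf' s).deriv] at hf
    exact contDiff_succ_of_hasDerivAt (hasDerivAt_radialSlope k hf') (ih _ hf.2.2)

lemma contDiff_lapProfile {m : ℕ} (n : ℕ) {f : C(ℝ, ℝ)} (hf : ContDiff ℝ m f) :
    ContDiff ℝ (m + 1) (lapProfile n f) :=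
  contDiff_succ_of_hasDerivAt (hasDerivAt_lapProfile n f) (contDiff_radialSlope n hf)

lemma contDiff_clampedGreen {m : ℕ} (n : ℕ) {f : C(ℝ, ℝ)} (hf : ContDiff ℝ m f) :
    ContDiff ℝ (m + 2) (clampedGreen n f) := by
  have hV : ContDiff ℝ (m + 1 : ℕ) (lapProfile n f) := contDiff_lapProfile n hf
  exact_mod_cast contDiff_succ_of_hasDerivAt (hasDerivAt_clampedGreen n f)
    (contDiff_radialSlope n hV)

/-! ### Comparison principle -/

lemma sq_mul_mem_Icc {r s : ℝ} (hr : r ∈ Icc (0 : ℝ) 1) (hs : s ∈ Icc (0 : ℝ) 1) :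
    r ^ 2 * s ∈ Icc (0 : ℝ) 1 :=
  unitInterval.mul_mem ⟨by positivity, pow_le_one₀ hr.1 hr.2⟩ hs

variable {f g : C(ℝ, ℝ)} {s c : ℝ}

lemma radialSlope_le_radialSlope (k : ℕ) {t : ℝ}
    (h : ∀ r ∈ Icc (0 : ℝ) 1, f (r ^ 2 * s) ≤ g (r ^ 2 * t)) :
    radialSlope k f s ≤ radialSlope k g t := by
  refine mul_le_mul_of_nonneg_left ?_ one_half_pos.le
  refine intervalIntegral.integral_mono_on zero_le_one
    (Continuous.intervalIntegrable (by fun_prop) _ _)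
    (Continuous.intervalIntegrable (by fun_prop) _ _) fun r hr ↦ ?_
  exact mul_le_mul_of_nonneg_left (h r hr) (pow_nonneg hr.1 _)

lemma radialSlope_nonneg (k : ℕ) (hf : ∀ t ∈ Icc (0 : ℝ) 1, 0 ≤ f t) (hs : s ∈ Icc (0 : ℝ) 1) :
    0 ≤ radialSlope k f s := by
  have := radialSlope_le_radialSlope (f := 0) (s := s) k
    fun r hr ↦ hf (r ^ 2 * s) (sq_mul_mem_Icc hr hs)
  rwa [map_zero] at this

lemma monotoneOn_radialSlope (k : ℕ) (hf : MonotoneOn f (Icc 0 1)) :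
    MonotoneOn (radialSlope k f) (Icc 0 1) := fun _ hs _ ht hst ↦
  radialSlope_le_radialSlope k fun _ hr ↦ hf (sq_mul_mem_Icc hr hs) (sq_mul_mem_Icc hr ht)
    (mul_le_mul_of_nonneg_left hst (sq_nonneg _))

lemma monotoneOn_lapProfile (n : ℕ) (hf : ∀ t ∈ Icc (0 : ℝ) 1, 0 ≤ f t) :
    MonotoneOn (lapProfile n f) (Icc 0 1) :=
  monotoneOn_of_hasDerivWithinAt_nonneg (convex_Icc 0 1) (lapProfile n f).continuous.continuousOn
    (fun s _ ↦ (hasDerivAt_lapProfile n f s).hasDerivWithinAt)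
    fun _ hs ↦ radialSlope_nonneg n hf (interior_subset hs)

lemma clampedGreen_nonneg (n : ℕ) (hf : ∀ t ∈ Icc (0 : ℝ) 1, 0 ≤ f t) (hs : s ∈ Icc (0 : ℝ) 1) :
    0 ≤ clampedGreen n f s := by
  have slope_nonpos : ∀ t ∈ Icc (0 : ℝ) 1, radialSlope n (lapProfile n f) t ≤ 0 := fun t ht ↦ by
    rw [← radialSlope_lapProfile_apply_one n f]
    exact monotoneOn_radialSlope n (monotoneOn_lapProfile n hf) ht ⟨zero_le_one, le_rfl⟩ ht.2
  rw [clampedGreen_apply, primitive_apply, intervalIntegral.integral_symm,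
    ← intervalIntegral.integral_neg]
  exact intervalIntegral.integral_nonneg hs.2 fun t ht ↦
    neg_nonneg.2 (slope_nonpos t ⟨hs.1.trans ht.1, ht.2⟩)

lemma clampedGreen_mono (n : ℕ) (h : ∀ t ∈ Icc (0 : ℝ) 1, f t ≤ g t) (hs : s ∈ Icc (0 : ℝ) 1) :
    clampedGreen n f s ≤ clampedGreen n g s := by
  have := clampedGreen_nonneg n (f := g - f) (fun t ht ↦ sub_nonneg.2 (h t ht)) hs
  rwa [map_sub, ContinuousMap.sub_apply, sub_nonneg] at this

lemma clampedGreen_congr (n : ℕ) (h : EqOn f g (Icc 0 1)) :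
    EqOn (clampedGreen n f) (clampedGreen n g) (Icc 0 1) := fun _ hs ↦
  (clampedGreen_mono n (fun _ ht ↦ (h ht).le) hs).antisymm
    (clampedGreen_mono n (fun _ ht ↦ (h ht).ge) hs)

lemma le_clampedGreen (n : ℕ) (h : ∀ t ∈ Icc (0 : ℝ) 1, c ≤ f t) (hs : s ∈ Icc (0 : ℝ) 1) :
    c * ((1 - s) ^ 2 / (8 * (n + 1) * (n + 3))) ≤ clampedGreen n f s := by
  have := clampedGreen_mono n (f := c • 1) (by simpa using h) hs
  rwa [map_smul, ContinuousMap.smul_apply, clampedGreen_one, smul_eq_mul] at this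

lemma clampedGreen_le (n : ℕ) (hc : 0 ≤ c) (h : ∀ t ∈ Icc (0 : ℝ) 1, f t ≤ c)
    (hs : s ∈ Icc (0 : ℝ) 1) : clampedGreen n f s ≤ c / (8 * (n + 1) * (n + 3)) := by
  have := clampedGreen_mono n (g := c • 1) (by simpa using h) hs
  rw [map_smul, ContinuousMap.smul_apply, clampedGreen_one, smul_eq_mul, ← mul_div_assoc] at this
  refine this.trans ?_
  gcongr
  exact mul_le_of_le_one_right hc (pow_le_one₀ (sub_nonneg.2 hs.2) (sub_le_self 1 hs.1))

lemma abs_clampedGreen_sub_le (n : ℕ) (h : ∀ t ∈ Icc (0 : ℝ) 1, |f t - g t| ≤ c)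
    (hs : s ∈ Icc (0 : ℝ) 1) :
    |clampedGreen n f s - clampedGreen n g s| ≤ c / (8 * (n + 1) * (n + 3)) := by
  have hc : 0 ≤ c := (abs_nonneg _).trans (h s hs)
  have hfg := clampedGreen_le n (f := f - g) hc (fun t ht ↦ (abs_le'.1 (h t ht)).1) hs
  have hgf := clampedGreen_le n (f := g - f) hc
    (fun t ht ↦ (le_abs_self _).trans ((abs_sub_comm _ _).trans_le (h t ht))) hs
  rw [map_sub, ContinuousMap.sub_apply] at hfg hgf
  exact abs_sub_le_iff.2 ⟨hfg, hgf⟩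

end RadialOperators

/-! ### The Laplacian of a radial function -/

lemma hasFDerivAt_comp_norm_sq {E : Type*} [NormedAddCommGroup E] [InnerProductSpace ℝ E]
    {U : ℝ → ℝ} {p : ℝ} {x : E} (h : HasDerivAt U p (‖x‖ ^ 2)) :
    HasFDerivAt (fun y ↦ U (‖y‖ ^ 2)) (p • 2 • innerSL ℝ x) x :=
  h.comp_hasFDerivAt x (hasStrictFDerivAt_norm_sq x).hasFDerivAt

lemma lap_comp_norm_sq {N : ℕ} {U P Q : ℝ → ℝ} (hU : ∀ s, HasDerivAt U (P s) s)
    (hP : ∀ s, HasDerivAt P (Q s) s) (x : EuclideanSpace ℝ (Fin N)) :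
    lap (fun y : EuclideanSpace ℝ (Fin N) ↦ U (‖y‖ ^ 2)) x =
      4 * ‖x‖ ^ 2 * Q (‖x‖ ^ 2) + 2 * N * P (‖x‖ ^ 2) := by
  have first_partial (i : Fin N) (y : EuclideanSpace ℝ (Fin N)) :
      fderiv ℝ (fun z : EuclideanSpace ℝ (Fin N) ↦ U (‖z‖ ^ 2)) y (EuclideanSpace.single i 1) =
        P (‖y‖ ^ 2) * (2 * y i) := by
    rw [(hasFDerivAt_comp_norm_sq (hU _)).fderiv]
    simp [EuclideanSpace.inner_single_right]
  have second_partial (i : Fin N) :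
      fderiv ℝ (fun y : EuclideanSpace ℝ (Fin N) ↦ P (‖y‖ ^ 2) * (2 * y i)) x
        (EuclideanSpace.single i 1) = 4 * Q (‖x‖ ^ 2) * x i ^ 2 + 2 * P (‖x‖ ^ 2) := by
    have hcoord : HasFDerivAt (fun y : EuclideanSpace ℝ (Fin N) ↦ 2 * y i)
        ((2 : ℝ) • (EuclideanSpace.proj i : EuclideanSpace ℝ (Fin N) →L[ℝ] ℝ)) x :=
      (EuclideanSpace.proj i : EuclideanSpace ℝ (Fin N) →L[ℝ] ℝ).hasFDerivAt.const_mul 2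
    rw [((hasFDerivAt_comp_norm_sq (hP _)).fun_mul hcoord).fderiv]
    simp [EuclideanSpace.inner_single_right]
    ring
  simp_rw [lap, first_partial, second_partial, Finset.sum_add_distrib, ← Finset.mul_sum,
    ← EuclideanSpace.real_norm_sq_eq, Finset.sum_const, Finset.card_univ, Fintype.card_fin,
    nsmul_eq_mul]
  ring

lemma lap_clampedGreen (n : ℕ) (f : C(ℝ, ℝ)) (x : EuclideanSpace ℝ (Fin (n + 1))) :
    lap (fun y : EuclideanSpace ℝ (Fin (n + 1)) ↦ clampedGreen n f (‖y‖ ^ 2)) x =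
      lapProfile n f (‖x‖ ^ 2) := by
  rw [lap_comp_norm_sq (hasDerivAt_clampedGreen n f)
    (hasDerivAt_radialSlope n (hasDerivAt_lapProfile n f)), Nat.cast_succ]
  exact radialSlope_ode n (hasDerivAt_lapProfile n f) _

lemma biharm_clampedGreen (n : ℕ) {f : C(ℝ, ℝ)} (hf : ContDiff ℝ 1 f)
    (x : EuclideanSpace ℝ (Fin (n + 1))) :
    biharm (fun y : EuclideanSpace ℝ (Fin (n + 1)) ↦ clampedGreen n f (‖y‖ ^ 2)) x =
      f (‖x‖ ^ 2) := by
  obtain ⟨f', hf'⟩ := exists_hasDerivAt_of_contDiff hf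
  rw [biharm, funext (lap_clampedGreen n f), lap_comp_norm_sq (hasDerivAt_lapProfile n f)
    (hasDerivAt_radialSlope n hf'), Nat.cast_succ]
  exact radialSlope_ode n hf' _

lemma fderivWithin_clampedGreen_sphere (n : ℕ) (f : C(ℝ, ℝ)) {x : EuclideanSpace ℝ (Fin (n + 1))}
    (hx : ‖x‖ = 1) :
    fderivWithin ℝ (fun y : EuclideanSpace ℝ (Fin (n + 1)) ↦ clampedGreen n f (‖y‖ ^ 2))
      (closedBall 0 1) x = 0 := by
  have hunique : UniqueDiffWithinAt ℝ (closedBall (0 : EuclideanSpace ℝ (Fin (n + 1))) 1) x :=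
    uniqueDiffOn_convex (convex_closedBall 0 1)
      ⟨0, by simp [interior_closedBall (0 : EuclideanSpace ℝ (Fin (n + 1))) one_ne_zero]⟩ x
      (mem_closedBall_zero_iff.2 hx.le)
  rw [(hasFDerivAt_comp_norm_sq (hasDerivAt_clampedGreen n f _)).hasFDerivWithinAt.fderivWithin
    hunique, hx, one_pow, radialSlope_lapProfile_apply_one, zero_smul]

/-! ### Semilinear problems -/

lemma exists_continuousMap_eqOn_comp_clampedGreen (n : ℕ) {h : C(ℝ, ℝ)} {K : ℝ≥0}
    (hh : LipschitzWith K h) (hK : K < 8 * (n + 1) * (n + 3 : ℝ)) :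
    ∃ f : C(ℝ, ℝ), EqOn f (h ∘ clampedGreen n f) (Icc 0 1) := by
  let extend (f : C(Icc (0 : ℝ) 1, ℝ)) : C(ℝ, ℝ) := f.IccExtend zero_le_one
  let Φ (f : C(Icc (0 : ℝ) 1, ℝ)) : C(Icc (0 : ℝ) 1, ℝ) :=
    (h.comp (clampedGreen n (extend f))).restrict (Icc 0 1)
  have hΦ : ContractingWith (K / (8 * (n + 1) * (n + 3))) Φ := by
    refine ⟨by rw [div_lt_one (by positivity)]; exact_mod_cast hK,
      .of_dist_le_mul fun f g ↦ (ContinuousMap.dist_le (by positivity)).2 fun s ↦ ?_⟩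
    have hdist : ∀ t ∈ Icc (0 : ℝ) 1, |extend f t - extend g t| ≤ dist f g := fun t ht ↦ by
      simpa only [extend, ContinuousMap.coe_IccExtend, IccExtend_of_mem _ _ ht, Real.dist_eq]
        using f.dist_apply_le_dist ⟨t, ht⟩
    calc dist (Φ f s) (Φ g s)
        ≤ K * dist (clampedGreen n (extend f) s) (clampedGreen n (extend g) s) := hh.dist_le_mul _ _
      _ ≤ K * (dist f g / (8 * (n + 1) * (n + 3))) := by
        gcongr
        exact abs_clampedGreen_sub_le n hdist s.2
      _ = (K / (8 * (n + 1) * (n + 3)) : ℝ≥0) * dist f g := by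
        push_cast
        ring
  refine ⟨extend (ContractingWith.fixedPoint Φ hΦ), fun s hs ↦ ?_⟩
  rw [ContinuousMap.coe_IccExtend, IccExtend_of_mem _ _ hs]
  exact (DFunLike.congr_fun hΦ.fixedPoint_isFixedPt ⟨s, hs⟩).symm

lemma exists_contDiff_eqOn_comp_clampedGreen (n : ℕ) {h : C(ℝ, ℝ)} {K : ℝ≥0}
    (hC : ContDiff ℝ 2 h) (hL : LipschitzWith K h) (hK : K < 8 * (n + 1) * (n + 3 : ℝ)) :
    ∃ f : C(ℝ, ℝ), ContDiff ℝ 2 f ∧ EqOn f (h ∘ clampedGreen n f) (Icc 0 1) := by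
  obtain ⟨f, hf⟩ := exists_continuousMap_eqOn_comp_clampedGreen n hL hK
  have hG : ContDiff ℝ 2 (clampedGreen n f) := by
    exact_mod_cast contDiff_clampedGreen (m := 0) n (contDiff_zero.2 f.continuous)
  exact ⟨h.comp (clampedGreen n f), hC.comp hG, fun s hs ↦
    congrArg h (clampedGreen_congr n hf hs)⟩

lemma exists_contDiff_truncation {a b : ℝ} (hab : a < b) :
    ∃ θ : ℝ → ℝ, ContDiff ℝ ∞ θ ∧ LipschitzWith 1 θ ∧ (∀ t ≤ a, θ t = t) ∧ ∀ t, θ t ≤ b := by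
  let θ' : C(ℝ, ℝ) := ⟨fun t ↦ Real.smoothTransition ((b - t) / (b - a)), by fun_prop⟩
  have hθ'_eq_one : ∀ t ≤ a, θ' t = 1 := fun t ht ↦
    Real.smoothTransition.one_of_one_le ((one_le_div (sub_pos.2 hab)).2 (by linarith))
  have hθ'_le (t : ℝ) : θ' t ≤ 1 := Real.smoothTransition.le_one _
  have hθ'_contDiff (m : ℕ) : ContDiff ℝ m θ' := Real.smoothTransition.contDiff.comp (by fun_prop)
  have hderiv (t : ℝ) : HasDerivAt (fun t ↦ a + primitive a θ' t) (θ' t) t :=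
    (hasDerivAt_primitive a θ' t).const_add a
  have hθ_eq : ∀ t ≤ a, a + primitive a θ' t = t := fun t ht ↦ by
    rw [primitive_apply, intervalIntegral.integral_congr (g := fun _ ↦ 1) fun τ hτ ↦
      hθ'_eq_one τ (by rw [uIcc_of_ge ht] at hτ; exact hτ.2)]
    simp
  have hθ_le_self (t : ℝ) : a + primitive a θ' t ≤ t := by
    rcases le_total t a with ht | ht
    · exact (hθ_eq t ht).le
    · have hanti : Antitone fun t ↦ a + primitive a θ' t - t :=
        antitone_of_hasDerivAt_nonpos (fun t ↦ (hderiv t).sub (hasDerivAt_id t))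
          fun t ↦ sub_nonpos.2 (hθ'_le t)
      linarith [hanti ht, hθ_eq a le_rfl]
  have hθ_le (t : ℝ) : a + primitive a θ' t ≤ b := by
    rcases le_total t b with ht | ht
    · exact (hθ_le_self t).trans ht
    · have hconst : primitive a θ' t = primitive a θ' b := by
        refine primitive_eq_primitive_of_eq_zero fun τ hτ ↦ ?_
        rw [uIcc_of_le ht] at hτ
        exact Real.smoothTransition.zero_of_nonpos
          (div_nonpos_of_nonpos_of_nonneg (sub_nonpos.2 hτ.1) (sub_pos.2 hab).le)
      exact hconst ▸ hθ_le_self b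
  have hlip : LipschitzWith 1 (fun t ↦ a + primitive a θ' t) :=
    lipschitzWith_of_nnnorm_deriv_le (fun t ↦ (hderiv t).differentiableAt) fun t ↦ by
      rw [(hderiv t).deriv, ← NNReal.coe_le_coe, coe_nnnorm, Real.norm_of_nonneg]
      exacts [hθ'_le t, Real.smoothTransition.nonneg _]
  have hcontDiff : ContDiff ℝ ∞ fun t ↦ a + primitive a θ' t := contDiff_infty.2 fun m ↦
    (contDiff_succ_of_hasDerivAt hderiv (hθ'_contDiff m)).of_le le_self_add
  exact ⟨_, hcontDiff, hlip, hθ_eq, hθ_le⟩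

lemma abs_inv_one_sub_sq_sub_le {b x y : ℝ} (hb : b < 1) (hx : x ≤ b) (hy : y ≤ b) :
    |1 / (1 - x) ^ 2 - 1 / (1 - y) ^ 2| ≤ 2 / (1 - b) ^ 3 * |x - y| := by
  refine (convex_Iic b).norm_image_sub_le_of_norm_hasDerivWithin_le
    (f := fun t ↦ 1 / (1 - t) ^ 2) (f' := fun t ↦ 2 / (1 - t) ^ 3) (fun t ht ↦ ?_) (fun t ht ↦ ?_)
    hy hx
  · have h1t : 1 - t ≠ 0 := (sub_pos.2 (lt_of_le_of_lt ht hb)).ne'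
    have := (((hasDerivAt_id t).const_sub 1).pow 2).inv (pow_ne_zero 2 h1t)
    simp only [one_div]
    refine (this.congr_deriv ?_).hasDerivWithinAt
    simp only [Pi.pow_apply, id]
    field_simp
    push_cast
    ring
  · have h1b : 0 < 1 - b := sub_pos.2 hb
    have hbt : 1 - b ≤ 1 - t := sub_le_sub_left ht 1
    rw [Real.norm_of_nonneg (div_nonneg zero_le_two (pow_nonneg (h1b.le.trans hbt) 3))]
    gcongr

lemma exists_truncated_nonlinearity {lam a b : ℝ} (hlam : 0 ≤ lam) (hab : a < b) (hb : b < 1) :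
    ∃ h : C(ℝ, ℝ), ContDiff ℝ ∞ h ∧ LipschitzWith (lam * (2 / (1 - b) ^ 3)).toNNReal h ∧
      (∀ t, 0 ≤ h t) ∧ (∀ t, h t ≤ lam / (1 - b) ^ 2) ∧ ∀ t ≤ a, h t = lam / (1 - t) ^ 2 := by
  obtain ⟨θ, hC, hL, hθ_eq, hθ_le⟩ := exists_contDiff_truncation hab
  have h1b : 0 < 1 - b := sub_pos.2 hb
  have hbθ (t : ℝ) : 1 - b ≤ 1 - θ t := sub_le_sub_left (hθ_le t) 1
  have hcontDiff : ContDiff ℝ ∞ fun t ↦ lam / (1 - θ t) ^ 2 :=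
    contDiff_const.div ((contDiff_const.sub hC).pow 2)
      fun t ↦ pow_ne_zero 2 (h1b.trans_le (hbθ t)).ne'
  refine ⟨⟨_, hcontDiff.continuous⟩, hcontDiff, .of_dist_le_mul fun x y ↦ ?_,
    fun t ↦ div_nonneg hlam (sq_nonneg _), fun t ↦ ?_, fun t ht ↦ by simp [hθ_eq t ht]⟩
  · rw [Real.coe_toNNReal _ (by positivity)]
    calc |lam / (1 - θ x) ^ 2 - lam / (1 - θ y) ^ 2|
        = lam * |1 / (1 - θ x) ^ 2 - 1 / (1 - θ y) ^ 2| := by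
          rw [← abs_of_nonneg hlam, ← abs_mul, abs_of_nonneg hlam]
          ring_nf
      _ ≤ lam * (2 / (1 - b) ^ 3 * dist x y) := by
          gcongr
          refine (abs_inv_one_sub_sq_sub_le hb (hθ_le x) (hθ_le y)).trans ?_
          gcongr
          simpa [Real.dist_eq] using hL.dist_le_mul x y
      _ = lam * (2 / (1 - b) ^ 3) * dist x y := (mul_assoc _ _ _).symm
  · have := hbθ t
    dsimp only [ContinuousMap.coe_mk]
    gcongr

lemma exists_radial_profile (n : ℕ) {lam : ℝ} (hlam : 0 ≤ lam) (hle : lam ≤ (n + 1) * (n + 3)) :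
    ∃ f : C(ℝ, ℝ), ContDiff ℝ 2 f ∧ ∀ s ∈ Icc (0 : ℝ) 1, 0 ≤ clampedGreen n f s ∧
      clampedGreen n f s < 1 ∧ f s = lam / (1 - clampedGreen n f s) ^ 2 := by
  obtain ⟨h, hC, hL, h_nonneg, h_le, h_eq⟩ :=
    exists_truncated_nonlinearity (a := 3 / 10) (b := 1 / 3) hlam (by norm_num) (by norm_num)
  have hC2 : ContDiff ℝ 2 h := hC.of_le (by norm_cast)
  obtain ⟨f, hf, hfix⟩ := exists_contDiff_eqOn_comp_clampedGreen n hC2 hL <| by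
    rw [Real.coe_toNNReal _ (by positivity)]
    nlinarith [show (0 : ℝ) < (n + 1) * (n + 3) by positivity]
  refine ⟨f, hf, fun s hs ↦ ?_⟩
  have hG_le : clampedGreen n f s ≤ 3 / 10 := by
    refine (clampedGreen_le n (c := lam / (1 - 1 / 3) ^ 2) (by positivity)
      (fun t ht ↦ (hfix ht).trans_le (h_le _)) hs).trans ?_
    rw [div_le_iff₀ (by positivity)]
    calc lam / (1 - 1 / 3) ^ 2 = 9 / 4 * lam := by ring
      _ ≤ 9 / 4 * ((n + 1) * (n + 3)) := by gcongr
      _ ≤ 3 / 10 * (8 * (n + 1) * (n + 3)) := by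
        nlinarith [show (0 : ℝ) < (n + 1) * (n + 3) by positivity]
  exact ⟨clampedGreen_nonneg n (fun t ht ↦ (h_nonneg _).trans_eq (hfix ht).symm) hs, by linarith,
    (hfix hs).trans (h_eq _ hG_le)⟩

lemma le_div_one_sub_sq {lam t : ℝ} (hlam : 0 ≤ lam) (ht : 0 ≤ t) (ht1 : t < 1) :
    lam ≤ lam / (1 - t) ^ 2 := by
  have h1t : 0 < 1 - t := sub_pos.2 ht1
  exact le_div_self hlam (pow_pos h1t 2) (pow_le_one₀ h1t.le (sub_le_self 1 ht))

lemma exists_isClassicalSolution (n : ℕ) {lam : ℝ} (hlam : 0 < lam)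
    (hle : lam ≤ (n + 1) * (n + 3)) : ∃ u, IsClassicalSolution (n + 1) lam u := by
  obtain ⟨f, hf, hprofile⟩ := exists_radial_profile n hlam.le hle
  have lam_le : ∀ s ∈ Icc (0 : ℝ) 1, lam ≤ f s := fun s hs ↦ by
    obtain ⟨h0, h1, hfs⟩ := hprofile s hs
    exact (le_div_one_sub_sq hlam.le h0 h1).trans_eq hfs.symm
  have mem_Icc : ∀ x ∈ ball (0 : EuclideanSpace ℝ (Fin (n + 1))) 1, ‖x‖ ^ 2 ∈ Icc (0 : ℝ) 1 :=
    fun x hx ↦ ⟨sq_nonneg _, pow_le_one₀ (norm_nonneg x) (mem_ball_zero_iff.1 hx).le⟩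
  refine ⟨fun x ↦ clampedGreen n f (‖x‖ ^ 2), ?_, fun x hx ↦ ?_,
    fun x hx ↦ (hprofile _ (mem_Icc x hx)).2.1, fun x hx ↦ ?_, fun x hx ↦ ?_,
    fun x hx ↦ by rw [fderivWithin_clampedGreen_sphere n f hx, zero_apply]⟩
  · have hG : ContDiff ℝ 4 (clampedGreen n f) := by
      exact_mod_cast contDiff_clampedGreen (m := 2) n hf
    exact (hG.comp (contDiff_norm_sq ℝ)).contDiffOn
  · have : 0 < 1 - ‖x‖ ^ 2 :=
      sub_pos.2 (pow_lt_one₀ (norm_nonneg x) (mem_ball_zero_iff.1 hx) two_ne_zero)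
    exact lt_of_lt_of_le (by positivity) (le_clampedGreen n lam_le (mem_Icc x hx))
  · rw [biharm_clampedGreen n (hf.of_le one_le_two)]
    exact (hprofile _ (mem_Icc x hx)).2.2
  · rw [hx, one_pow, clampedGreen_apply_one]

/-! ### Testing against a compactly supported function -/

section Testing

lemma integrable_mul_of_tsupport_subset {X : Type*} [TopologicalSpace X] [T2Space X]
    [MeasurableSpace X] [OpensMeasurableSpace X] {μ : Measure X} [IsFiniteMeasureOnCompacts μ]
    {φ g : X → ℝ} {Ω : Set X} (hφ : Continuous φ) (hcpt : HasCompactSupport φ) (hΩ : IsOpen Ω)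
    (hsupp : tsupport φ ⊆ Ω) (hg : ContinuousOn g Ω) : Integrable (fun x ↦ φ x * g x) μ :=
  ((hφ.continuousOn.mul hg).continuous_of_tsupport_subset hΩ
    (tsupport_mul_subset_left.trans hsupp)).integrable_of_hasCompactSupport hcpt.mul_right

section FDeriv

variable {E : Type*} [NormedAddCommGroup E] [NormedSpace ℝ E] {Ω : Set E} {φ g : E → ℝ} (v : E)

lemma contDiffOn_fderiv_apply {m n : WithTop ℕ∞} (hg : ContDiffOn ℝ n g Ω) (hΩ : IsOpen Ω)
    (hmn : m + 1 ≤ n) : ContDiffOn ℝ m (fun x ↦ fderiv ℝ g x v) Ω :=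
  (hg.fderiv_of_isOpen hΩ hmn).clm_apply contDiffOn_const

lemma integral_mul_fderiv_apply [FiniteDimensional ℝ E] [MeasurableSpace E] [BorelSpace E]
    {μ : Measure E} [μ.IsAddHaarMeasure] (hφ : ContDiff ℝ 1 φ) (hcpt : HasCompactSupport φ)
    (hΩ : IsOpen Ω) (hsupp : tsupport φ ⊆ Ω) (hg : ContDiffOn ℝ 1 g Ω) :
    ∫ x, φ x * fderiv ℝ g x v ∂μ = -∫ x, fderiv ℝ φ x v * g x ∂μ := by
  refine integral_mul_fderiv_eq_neg_fderiv_mul_of_integrable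
    (integrable_mul_of_tsupport_subset ((hφ.continuous_fderiv one_ne_zero).clm_apply
      continuous_const) (hcpt.fderiv_apply ℝ v) hΩ
      ((tsupport_fderiv_apply_subset ℝ v).trans hsupp) hg.continuousOn)
    (integrable_mul_of_tsupport_subset hφ.continuous hcpt hΩ hsupp
      (contDiffOn_fderiv_apply (m := 0) v hg hΩ (by simp)).continuousOn)
    (integrable_mul_of_tsupport_subset hφ.continuous hcpt hΩ hsupp hg.continuousOn)
    (fun x _ ↦ hφ.differentiable one_ne_zero x) fun x hx ↦
      (hg.differentiableOn one_ne_zero).differentiableAt (hΩ.mem_nhds (hsupp hx))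

end FDeriv

variable {N : ℕ} {Ω : Set (EuclideanSpace ℝ (Fin N))} {φ g : EuclideanSpace ℝ (Fin N) → ℝ}

lemma contDiffOn_lap {m n : WithTop ℕ∞} (hg : ContDiffOn ℝ n g Ω) (hΩ : IsOpen Ω)
    (hmn : m + 1 + 1 ≤ n) : ContDiffOn ℝ m (lap g) Ω :=
  .sum fun _ _ ↦ contDiffOn_fderiv_apply _ (contDiffOn_fderiv_apply _ hg hΩ hmn) hΩ le_rfl

lemma contDiff_lap {m n : WithTop ℕ∞} (hφ : ContDiff ℝ n φ) (hmn : m + 1 + 1 ≤ n) :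
    ContDiff ℝ m (lap φ) :=
  contDiffOn_univ.1 (contDiffOn_lap hφ.contDiffOn isOpen_univ hmn)

lemma tsupport_lap_subset : tsupport (lap φ) ⊆ tsupport φ := by
  refine closure_minimal (fun x hx ↦ ?_) (isClosed_tsupport φ)
  obtain ⟨i, -, hi⟩ := Finset.exists_ne_zero_of_sum_ne_zero hx
  exact tsupport_fderiv_apply_subset ℝ _ (tsupport_fderiv_apply_subset ℝ _ (subset_tsupport _ hi))

lemma integral_mul_lap (hφ : ContDiff ℝ 2 φ) (hcpt : HasCompactSupport φ) (hΩ : IsOpen Ω)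
    (hsupp : tsupport φ ⊆ Ω) (hg : ContDiffOn ℝ 2 g Ω) :
    ∫ x, φ x * lap g x = ∫ x, lap φ x * g x := by
  let e (i : Fin N) : EuclideanSpace ℝ (Fin N) := EuclideanSpace.single i 1
  have hpφ (i) : ContDiff ℝ 1 fun x ↦ fderiv ℝ φ x (e i) :=
    contDiffOn_univ.1 (contDiffOn_fderiv_apply _ hφ.contDiffOn isOpen_univ one_add_one_eq_two.le)
  have hpg (i) : ContDiffOn ℝ 1 (fun x ↦ fderiv ℝ g x (e i)) Ω :=
    contDiffOn_fderiv_apply _ hg hΩ one_add_one_eq_two.le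
  have hpcpt (i) : HasCompactSupport fun x ↦ fderiv ℝ φ x (e i) := hcpt.fderiv_apply ℝ (e i)
  have hpsupp (i) : tsupport (fun x ↦ fderiv ℝ φ x (e i)) ⊆ Ω :=
    (tsupport_fderiv_apply_subset ℝ (e i)).trans hsupp
  have integral_partial (i) :
      ∫ x, φ x * fderiv ℝ (fun y ↦ fderiv ℝ g y (e i)) x (e i) =
        ∫ x, fderiv ℝ (fun y ↦ fderiv ℝ φ y (e i)) x (e i) * g x := by
    rw [integral_mul_fderiv_apply (e i) (hφ.of_le one_le_two) hcpt hΩ hsupp (hpg i),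
      integral_mul_fderiv_apply (e i) (hpφ i) (hpcpt i) hΩ (hpsupp i) (hg.of_le one_le_two),
      neg_neg]
  simp_rw [lap, Finset.mul_sum, Finset.sum_mul]
  rw [integral_finsetSum _ fun i _ ↦ ?_, integral_finsetSum _ fun i _ ↦ ?_]
  · exact Finset.sum_congr rfl fun i _ ↦ integral_partial i
  · exact integrable_mul_of_tsupport_subset
      (((hpφ i).continuous_fderiv one_ne_zero).clm_apply continuous_const)
      ((hpcpt i).fderiv_apply ℝ (e i)) hΩ
      ((tsupport_fderiv_apply_subset ℝ (e i)).trans (hpsupp i)) hg.continuousOn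
  · exact integrable_mul_of_tsupport_subset hφ.continuous hcpt hΩ hsupp
      (contDiffOn_fderiv_apply (m := 0) (e i) (hpg i) hΩ (by simp)).continuousOn

lemma integral_mul_biharm (hφ : ContDiff ℝ 4 φ) (hcpt : HasCompactSupport φ) (hΩ : IsOpen Ω)
    (hsupp : tsupport φ ⊆ Ω) (hg : ContDiffOn ℝ 4 g Ω) :
    ∫ x, φ x * biharm g x = ∫ x, biharm φ x * g x := by
  have hadd : (2 + 1 + 1 : WithTop ℕ∞) ≤ 4 := by norm_num
  simp only [biharm]
  rw [integral_mul_lap (hφ.of_le (by norm_num)) hcpt hΩ hsupp (contDiffOn_lap hg hΩ hadd),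
    integral_mul_lap (contDiff_lap hφ hadd)
      (hcpt.of_isClosed_subset (isClosed_tsupport _) tsupport_lap_subset) hΩ
      (tsupport_lap_subset.trans hsupp) (hg.of_le (by norm_num))]

lemma tsupport_biharm_subset : tsupport (biharm φ) ⊆ tsupport φ :=
  tsupport_lap_subset.trans tsupport_lap_subset

lemma continuousOn_biharm (hg : ContDiffOn ℝ 4 g Ω) (hΩ : IsOpen Ω) :
    ContinuousOn (biharm g) Ω :=
  (contDiffOn_lap (m := 0) (n := 2) (contDiffOn_lap hg hΩ (by norm_num)) hΩ
    (by norm_num)).continuousOn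

lemma continuous_biharm (hφ : ContDiff ℝ 4 φ) : Continuous (biharm φ) :=
  continuousOn_univ.1 (continuousOn_biharm hφ.contDiffOn isOpen_univ)

end Testing

namespace IsClassicalSolution

variable {N : ℕ} {lam : ℝ} {u φ : EuclideanSpace ℝ (Fin N) → ℝ}

lemma le_biharm (hu : IsClassicalSolution N lam u) (hlam : 0 ≤ lam)
    {x : EuclideanSpace ℝ (Fin N)} (hx : x ∈ ball 0 1) : lam ≤ biharm u x :=
  (le_div_one_sub_sq hlam (hu.pos x hx).le (hu.lt_one x hx)).trans_eq (hu.eqn x hx).symm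

lemma mul_le_abs (hu : IsClassicalSolution N lam u) {x : EuclideanSpace ℝ (Fin N)}
    (hx : x ∈ ball 0 1) (c : ℝ) : c * u x ≤ |c| := by
  refine (le_abs_self _).trans ?_
  rw [abs_mul, abs_of_pos (hu.pos x hx)]
  exact mul_le_of_le_one_right (abs_nonneg c) (hu.lt_one x hx).le

lemma mul_integral_le (hu : IsClassicalSolution N lam u) (hlam : 0 ≤ lam) (hφ : ContDiff ℝ 4 φ)
    (hφ_nonneg : ∀ x, 0 ≤ φ x) (hsupp : tsupport φ ⊆ ball 0 1) :
    lam * ∫ x, φ x ≤ ∫ x, |biharm φ x| := by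
  have hcpt : HasCompactSupport φ := (isCompact_closedBall 0 1).of_isClosed_subset
    (isClosed_tsupport φ) (hsupp.trans ball_subset_closedBall)
  have hbcpt : HasCompactSupport (biharm φ) :=
    hcpt.of_isClosed_subset (isClosed_tsupport _) tsupport_biharm_subset
  have hbsupp : tsupport (biharm φ) ⊆ ball 0 1 := tsupport_biharm_subset.trans hsupp
  have hu4 : ContDiffOn ℝ 4 u (ball 0 1) := hu.contDiffOn.mono ball_subset_closedBall
  calc lam * ∫ x, φ x = ∫ x, φ x * lam := by rw [integral_mul_const, mul_comm]
    _ ≤ ∫ x, φ x * biharm u x := by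
      refine integral_mono
        (integrable_mul_of_tsupport_subset hφ.continuous hcpt isOpen_ball hsupp continuousOn_const)
        (integrable_mul_of_tsupport_subset hφ.continuous hcpt isOpen_ball hsupp
          (continuousOn_biharm hu4 isOpen_ball)) fun x ↦ ?_
      by_cases hx : x ∈ tsupport φ
      · exact mul_le_mul_of_nonneg_left (hu.le_biharm hlam (hsupp hx)) (hφ_nonneg x)
      · simp [image_eq_zero_of_notMem_tsupport hx]
    _ = ∫ x, biharm φ x * u x := integral_mul_biharm hφ hcpt isOpen_ball hsupp hu4
    _ ≤ ∫ x, |biharm φ x| := by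
      refine integral_mono (integrable_mul_of_tsupport_subset (continuous_biharm hφ) hbcpt
        isOpen_ball hbsupp hu4.continuousOn)
        ((continuous_biharm hφ).abs.integrable_of_hasCompactSupport hbcpt.norm) fun x ↦ ?_
      by_cases hx : x ∈ tsupport (biharm φ)
      · exact hu.mul_le_abs (hbsupp hx) _
      · simp [image_eq_zero_of_notMem_tsupport hx]

end IsClassicalSolution

lemma bddAbove_solSet (N : ℕ) : BddAbove (solSet N) := by
  let φ : ContDiffBump (0 : EuclideanSpace ℝ (Fin N)) := ⟨1 / 4, 1 / 2, by norm_num, by norm_num⟩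
  have hsupp : tsupport φ ⊆ ball 0 1 :=
    φ.tsupport_eq.trans_subset (closedBall_subset_ball (by norm_num [φ]))
  refine ⟨(∫ x, |biharm φ x|) / ∫ x, φ x, fun lam ⟨hlam, u, hu⟩ ↦ ?_⟩
  exact (le_div_iff₀ φ.integral_pos).2
    (hu.mul_integral_le hlam.le φ.contDiff (fun _ ↦ φ.nonneg) hsupp)

lemma mul_add_two_le_sSup_solSet {N : ℕ} (hN : 1 ≤ N) : (N : ℝ) * (N + 2) ≤ sSup (solSet N) := by
  obtain ⟨n, rfl⟩ := Nat.exists_eq_add_of_le' hN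
  refine le_csSup (bddAbove_solSet _) ⟨by positivity, exists_isClassicalSolution n (by positivity)
    (le_of_eq ?_)⟩
  push_cast
  ring

/-- in every dimension N ≥ 1, the pull-in voltage satisfies λ* > λ̄_N. -/
theorem pullIn_gt_lamBar (N : ℕ) (hN : 1 ≤ N) :
    lamBar N < sSup (solSet N) := by
  calc lamBar N < N * (N + 2) := by
        have : (1 : ℝ) ≤ N := mod_cast hN
        unfold lamBar
        nlinarith
    _ ≤ sSup (solSet N) := mul_add_two_le_sSup_solSet hN
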